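/- arXiv:math/0407369 — 7 statements merged into one kernel-verified Lean document; each statement's English description precedes it below -/
import Mathlib

section
/- Let λ > 1, let A be a nonempty complete metric space, and let S : A → A be a λ-expansion, i.e. S is bijective and dist(S x, S y) = λ · dist(x, y) for all x, y ∈ A. Then for every δ > 0 and every two-sided δ-pseudo-orbit of S, i.e. a sequence (x_n)_{n∈ℤ} in A with dist(S x_n, x_{n+1}) ≤ δ for all n ∈ ℤ, there exists a unique point x ∈ A such that dist(Sⁿ x, x_n) ≤ δ/(λ−1) for all n ∈ ℤ (where Sⁿ denotes the n-th iterate of S for n ≥ 0 and of S⁻¹ for n < 0). -/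
/-!
A sequence `q : ℤ → A` is an orbit of `S` exactly when it is fixed by the transform
`q ↦ (n ↦ S⁻¹ (q (n + 1)))`. As `S⁻¹` contracts by `λ⁻¹`, so does this transform for the sup
distance, and it moves a `δ`-pseudo-orbit by at most `δ / λ`. Banach's fixed point theorem for
extended metrics therefore gives a unique orbit within `(δ / λ) / (1 - λ⁻¹) = δ / (λ - 1)` of the
pseudo-orbit.
-/

open Function UniformFun
open scoped ENNReal NNReal UniformConvergence

section OrbitTransform

variable {ι A : Type*}

/-- The graph transform on sequences, whose fixed points are the `u` with `T ∘ u ∘ σ = u`. For the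
shift `σ n = n + 1` on `ℤ` and `T = S⁻¹`, these are the two-sided orbits of `S`. Sequences live in
`ι →ᵤ A` because its extended metric is the sup distance. -/
def orbitTransform (T : A → A) (σ : ι → ι) (u : ι →ᵤ A) : ι →ᵤ A :=
  ofFun fun i ↦ T (toFun u (σ i))

theorem isFixedPt_orbitTransform_iff {T : A → A} {σ : ι → ι} {u : ι →ᵤ A} :
    IsFixedPt (orbitTransform T σ) u ↔ ∀ i, T (toFun u (σ i)) = toFun u i :=
  funext_iff

theorem contractingWith_orbitTransform [EMetricSpace A] {K : ℝ≥0} {T : A → A}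
    (hT : ContractingWith K T) (σ : ι → ι) : ContractingWith K (orbitTransform T σ) :=
  ⟨hT.1, fun _ _ ↦ UniformFun.edist_le.2 fun _ ↦
    hT.toLipschitzWith.edist_le_mul_of_le edist_eval_le⟩

end OrbitTransform

theorem existsUnique_isFixedPt_edist_le {X : Type*} [EMetricSpace X] [CompleteSpace X] {K : ℝ≥0}
    {f : X → X} (hf : ContractingWith K f) {x : X} {ε : ℝ≥0∞} (hε : ε ≠ ∞)
    (hx : edist x (f x) ≤ ε) : ∃! y, IsFixedPt f y ∧ edist x y ≤ ε / (1 - K) := by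
  have hx_ne_top : edist x (f x) ≠ ∞ := ne_top_of_le_ne_top hε hx
  have hbound_ne_top : ε / (1 - K) ≠ ∞ := ENNReal.div_ne_top hε hf.one_sub_K_ne_zero
  set y := ContractingWith.efixedPoint f hf x hx_ne_top
  have hy : IsFixedPt f y := hf.efixedPoint_isFixedPt hx_ne_top
  have hxy : edist x y ≤ ε / (1 - K) :=
    (hf.edist_efixedPoint_le hx_ne_top).trans (ENNReal.div_le_div_right hx _)
  refine ⟨y, ⟨hy, hxy⟩, fun z ⟨hz, hxz⟩ ↦ ?_⟩
  have hzy : edist z y ≠ ∞ := ne_top_of_le_ne_top (ENNReal.add_ne_top.2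
    ⟨ne_top_of_le_ne_top hbound_ne_top hxz, ne_top_of_le_ne_top hbound_ne_top hxy⟩)
    (edist_triangle_left z y x)
  exact (hf.eq_or_edist_eq_top_of_fixedPoints hz hy).resolve_right hzy

theorem existsUnique_orbit_edist_le {ι A : Type*} [EMetricSpace A] [CompleteSpace A] {K : ℝ≥0}
    {T : A → A} (hT : ContractingWith K T) (σ : ι → ι) {x : ι → A} {ε : ℝ≥0∞} (hε : ε ≠ ∞)
    (hx : ∀ i, edist (x i) (T (x (σ i))) ≤ ε) :
    ∃! q : ι → A, (∀ i, T (q (σ i)) = q i) ∧ ∀ i, edist (x i) (q i) ≤ ε / (1 - K) := by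
  refine (ofFun.existsUnique_congr fun q ↦ ?_).2 <|
    existsUnique_isFixedPt_edist_le (contractingWith_orbitTransform hT σ) (x := ofFun x) hε
      (UniformFun.edist_le.2 hx)
  simp only [isFixedPt_orbitTransform_iff, UniformFun.edist_le, toFun_ofFun]

theorem existsUnique_orbit_dist_le {ι A : Type*} [Nonempty ι] [MetricSpace A] [CompleteSpace A]
    {K : ℝ≥0} {T : A → A} (hT : ContractingWith K T) (σ : ι → ι) {x : ι → A} {ε : ℝ}
    (hx : ∀ i, dist (x i) (T (x (σ i))) ≤ ε) :
    ∃! q : ι → A, (∀ i, T (q (σ i)) = q i) ∧ ∀ i, dist (x i) (q i) ≤ ε / (1 - K) := by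
  have hε : 0 ≤ ε := dist_nonneg.trans (hx (Classical.arbitrary ι))
  have hbound : ENNReal.ofReal ε / (1 - K) = ENNReal.ofReal (ε / (1 - K)) := by
    rw [ENNReal.ofReal_div_of_pos hT.one_sub_K_pos, ENNReal.ofReal_sub _ K.coe_nonneg]
    simp
  have hnonneg : 0 ≤ ε / (1 - K) := div_nonneg hε hT.one_sub_K_pos.le
  simpa only [hbound, edist_le_ofReal hnonneg] using
    existsUnique_orbit_edist_le hT σ ENNReal.ofReal_ne_top
      fun i ↦ (edist_le_ofReal hε).2 (hx i)

theorem zpow_apply_zero_of_forall_apply_eq_succ {A : Type*} {S : Equiv.Perm A} {q : ℤ → A}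
    (hq : ∀ n, S (q n) = q (n + 1)) (n : ℤ) : (S ^ n) (q 0) = q n := by
  induction n with
  | zero => simp
  | succ k ih => rw [add_comm, zpow_one_add, Equiv.Perm.mul_apply, ih, hq, add_comm]
  | pred k ih =>
    apply S.injective
    rw [hq, ← Equiv.Perm.mul_apply, ← zpow_one_add]
    simpa using ih

theorem contractingWith_symm_of_le_dist {A : Type*} [MetricSpace A] {lam : ℝ≥0} (hlam : 1 < lam)
    {S : Equiv.Perm A} (hS : ∀ x y, lam * dist x y ≤ dist (S x) (S y)) :
    ContractingWith lam⁻¹ S.symm := by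
  refine ⟨inv_lt_one_of_one_lt₀ hlam, ?_⟩
  refine AntilipschitzWith.to_rightInverse (.of_le_mul_dist fun x y ↦ ?_) S.apply_symm_apply
  rw [NNReal.coe_inv, le_inv_mul_iff₀ (by positivity)]
  exact hS x y

theorem expansion_unique_shadowing_general {A : Type*} [MetricSpace A] [CompleteSpace A]
    {lam : ℝ} (hlam : 1 < lam) {S : Equiv.Perm A} (hS : ∀ x y, lam * dist x y ≤ dist (S x) (S y))
    {δ : ℝ} {x : ℤ → A} (hx : ∀ n, dist (S (x n)) (x (n + 1)) ≤ δ) :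
    ∃! p : A, ∀ n : ℤ, dist ((S ^ n) p) (x n) ≤ δ / (lam - 1) := by
  lift lam to ℝ≥0 using by positivity
  have hback (n : ℤ) : dist (x n) (S.symm (x (n + 1))) ≤ δ / lam := by
    rw [le_div_iff₀' (by positivity)]
    have hexpand := hS (x n) (S.symm (x (n + 1)))
    rw [S.apply_symm_apply] at hexpand
    exact hexpand.trans (hx n)
  have hbound : δ / lam / (1 - (lam⁻¹ : ℝ≥0)) = δ / (lam - 1) := by
    rw [div_div, mul_sub, NNReal.coe_inv, mul_inv_cancel₀ (by positivity), mul_one]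
  obtain ⟨q, ⟨hq, hqx⟩, hunique⟩ :=
    existsUnique_orbit_dist_le (contractingWith_symm_of_le_dist hlam hS) (· + 1) hback
  simp only [hbound, dist_comm (x _)] at hqx hunique
  have horbit : ∀ n : ℤ, (S ^ n) (q 0) = q n :=
    zpow_apply_zero_of_forall_apply_eq_succ fun n ↦ (S.symm_apply_eq.1 (hq n)).symm
  refine ⟨q 0, fun n ↦ by simpa only [horbit] using hqx n, fun p hp ↦ ?_⟩
  have hpq : (fun n : ℤ ↦ (S ^ n) p) = q :=
    hunique _ ⟨fun n ↦ by rw [S.symm_apply_eq, add_comm, zpow_one_add, Equiv.Perm.mul_apply], hp⟩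
  simpa using congrFun hpq 0

/-- unique shadowing of two-sided δ-pseudo-orbits for a λ-expansion
on a nonempty complete metric space, with shadowing bound δ/(λ-1). -/
theorem expansion_unique_shadowing
    {A : Type*} [MetricSpace A] [CompleteSpace A] [Nonempty A]
    (lam : ℝ) (hlam : 1 < lam) (S : Equiv.Perm A)
    (hS : ∀ x y : A, dist (S x) (S y) = lam * dist x y)
    (δ : ℝ) (hδ : 0 < δ) (x : ℤ → A)
    (hx : ∀ n : ℤ, dist (S (x n)) (x (n + 1)) ≤ δ) :
    ∃! p : A, ∀ n : ℤ, dist ((S ^ n) p) (x n) ≤ δ / (lam - 1) :=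
  expansion_unique_shadowing_general hlam (fun a b ↦ (hS a b).ge) hx
end

section
/- Let λ > 1, let A and B be complete metric spaces, let S : A → A be a λ-expansion and T : B → B a λ⁻¹-contraction, and let Φ(a, b) = (S a, T b) on A × B with the sup metric. Let G : A × B → A × B be a homeomorphism with δ := sup_z dist(G z, Φ z) < ∞. Then there exists a continuous map H : A × B → A × B such that H ∘ G = Φ ∘ H and dist(H z, z) ≤ λδ/(λ−1) for all z ∈ A × B. -/
/-!
Apply the Banach fixed-point theorem to the operator `h ↦ R ∘ h ∘ g` on continuous maps with the
uniform distance: if `R` is a contraction, so is this operator, and a map `p` which it moves by a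
finite amount lies near a fixed point `h = R ∘ h ∘ g`. When `p` almost semiconjugates `G` to a
contraction `T`, taking `R = T` and `g = G⁻¹` gives an exact semiconjugacy; when it almost
semiconjugates `G` to an expansion `S`, one takes `R = S⁻¹` and `g = G`. The projections of `A × B`
are such maps `p`, and the two resulting semiconjugacies are the components of `H`.
-/

open Function UniformFun
open scoped ENNReal NNReal UniformConvergence

section Semiconjugacy

lemma lipschitzWith_ofFun_comp_comp {X Y C D : Type*} [PseudoEMetricSpace C]
    [PseudoEMetricSpace D] {K : ℝ≥0} {R : C → D} (hR : LipschitzWith K R) (g : X → Y) :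
    LipschitzWith K fun h : Y →ᵤ C ↦ ofFun (R ∘ toFun h ∘ g) :=
  lipschitzWith_ofFun_iff.2 fun x ↦ by
    simpa only [mul_one, comp_def] using hR.comp (lipschitzWith_eval (g x))

variable {X C : Type*} [TopologicalSpace X] [EMetricSpace C] [CompleteSpace C] {K : ℝ≥0}
  {p : X → C} {δ : ℝ≥0∞}

lemma exists_continuous_comp_comp_eq {R : C → C} (hR : ContractingWith K R) {g : X → X}
    (hg : Continuous g) (hp : Continuous p) (hδ : δ ≠ ∞)
    (hpδ : ∀ x, edist (p x) (R (p (g x))) ≤ δ) :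
    ∃ h : X → C, Continuous h ∧ R ∘ h ∘ g = h ∧ ∀ x, edist (h x) (p x) ≤ δ / (1 - K) := by
  let F : (X →ᵤ C) → (X →ᵤ C) := fun h ↦ ofFun (R ∘ toFun h ∘ g)
  have hF : ContractingWith K F := ⟨hR.1, lipschitzWith_ofFun_comp_comp hR.2 g⟩
  have isComplete_continuous : IsComplete {h : X →ᵤ C | Continuous (toFun h)} :=
    (UniformFun.isClosed_setOfPred_continuous X).isComplete
  have mapsTo_continuous :
      Set.MapsTo F {h | Continuous (toFun h)} {h | Continuous (toFun h)} :=
    fun _ hh ↦ hR.toLipschitzWith.continuous.comp (hh.comp hg)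
  have edist_le_δ : edist (ofFun p) (F (ofFun p)) ≤ δ := UniformFun.edist_le.2 hpδ
  obtain ⟨h, hc, hfix, -, hdist⟩ := ContractingWith.exists_fixedPoint' isComplete_continuous
    mapsTo_continuous (hF.restrict mapsTo_continuous) (x := ofFun p) hp
    (ne_top_of_le_ne_top hδ edist_le_δ)
  refine ⟨toFun h, hc, hfix, fun x ↦ ?_⟩
  calc edist (toFun h x) (p x) ≤ edist h (ofFun p) := edist_eval_le (g := ofFun p)
    _ = edist (ofFun p) h := edist_comm _ _
    _ ≤ edist (ofFun p) (F (ofFun p)) / (1 - K) := by simpa using hdist 0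
    _ ≤ δ / (1 - K) := by gcongr

lemma exists_continuous_semiconj_of_contractingWith {T : C → C} (hT : ContractingWith K T)
    (G : X ≃ₜ X) (hp : Continuous p) (hδ : δ ≠ ∞) (hpδ : ∀ x, edist (p (G x)) (T (p x)) ≤ δ) :
    ∃ h : X → C, Continuous h ∧ Semiconj h G T ∧ ∀ x, edist (h x) (p x) ≤ δ / (1 - K) := by
  obtain ⟨h, hc, hfix, hdist⟩ := exists_continuous_comp_comp_eq hT G.symm.continuous hp hδ
    fun x ↦ by simpa using hpδ (G.symm x)
  exact ⟨h, hc, fun x ↦ by simpa using (congrFun hfix (G x)).symm, hdist⟩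

lemma exists_continuous_semiconj_of_antilipschitzWith (hK : K < 1) {S : Equiv.Perm C}
    (hS : AntilipschitzWith K S) {g : X → X} (hg : Continuous g) (hp : Continuous p) (hδ : δ ≠ ∞)
    (hpδ : ∀ x, edist (p (g x)) (S (p x)) ≤ δ) :
    ∃ h : X → C, Continuous h ∧ Semiconj h g S ∧ ∀ x, edist (h x) (p x) ≤ K * δ / (1 - K) := by
  have hS_symm : ContractingWith K S.symm := ⟨hK, hS.to_rightInverse S.rightInverse_symm⟩
  have edist_symm_le (x : X) : edist (p x) (S.symm (p (g x))) ≤ K * δ :=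
    calc edist (p x) (S.symm (p (g x))) ≤ K * edist (S (p x)) (p (g x)) := by
          simpa using hS (p x) (S.symm (p (g x)))
      _ ≤ K * δ := by grw [edist_comm, hpδ x]
  obtain ⟨h, hc, hfix, hdist⟩ := exists_continuous_comp_comp_eq hS_symm hg hp
    (ENNReal.mul_ne_top ENNReal.coe_ne_top hδ) edist_symm_le
  exact ⟨h, hc, fun x ↦ S.symm_apply_eq.1 (congrFun hfix x), hdist⟩

end Semiconjugacy

lemma exists_continuous_semiconj_prodMap {A B : Type*} [EMetricSpace A] [CompleteSpace A]
    [EMetricSpace B] [CompleteSpace B] {K : ℝ≥0} {S : Equiv.Perm A} {T : B → B}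
    (hS : AntilipschitzWith K S) (hT : ContractingWith K T) (G : (A × B) ≃ₜ (A × B))
    {δ : ℝ≥0∞} (hδ : δ ≠ ∞) (hG : ∀ z, edist (G z) (Prod.map S T z) ≤ δ) :
    ∃ H : A × B → A × B, Continuous H ∧ Semiconj H G (Prod.map S T) ∧
      ∀ z, edist (H z) z ≤ δ / (1 - K) := by
  simp only [Prod.edist_eq, max_le_iff, forall_and] at hG
  obtain ⟨h₁, hc₁, hs₁, hd₁⟩ := exists_continuous_semiconj_of_antilipschitzWith hT.1 hS
    G.continuous continuous_fst hδ hG.1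
  obtain ⟨h₂, hc₂, hs₂, hd₂⟩ := exists_continuous_semiconj_of_contractingWith hT
    G continuous_snd hδ hG.2
  have hKδ : K * δ ≤ δ := mul_le_of_le_one_left' (by exact_mod_cast hT.1.le)
  refine ⟨fun z ↦ (h₁ z, h₂ z), hc₁.prodMk hc₂, fun z ↦ Prod.ext (hs₁ z) (hs₂ z),
    fun z ↦ max_le ?_ (hd₂ z)⟩
  exact (hd₁ z).trans (by gcongr)

lemma ofReal_div_one_sub_ofReal_inv {lam : ℝ} (hlam : 1 < lam) (δ : ℝ) :
    ENNReal.ofReal δ / (1 - ENNReal.ofReal lam⁻¹) = ENNReal.ofReal (lam * δ / (lam - 1)) := by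
  have hpos : 0 < 1 - lam⁻¹ := sub_pos.2 (inv_lt_one_of_one_lt₀ hlam)
  rw [← ENNReal.ofReal_one, ← ENNReal.ofReal_sub _ (by positivity),
    ← ENNReal.ofReal_div_of_pos hpos]
  congr 1
  field_simp

theorem split_hyperbolic_semiconjugacy_exists_general
    {A B : Type*} [MetricSpace A] [CompleteSpace A] [MetricSpace B] [CompleteSpace B]
    {lam : ℝ} (hlam : 1 < lam) {S : Equiv.Perm A} {T : B → B}
    (hS : ∀ x y : A, lam * dist x y ≤ dist (S x) (S y))
    (hT : ∀ x y : B, dist (T x) (T y) ≤ lam⁻¹ * dist x y)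
    (G : (A × B) ≃ₜ (A × B)) {δ : ℝ} (hG : ∀ z, dist (G z) (Prod.map S T z) ≤ δ) :
    ∃ H : A × B → A × B, Continuous H ∧ Semiconj H G (Prod.map S T) ∧
      ∀ z, dist (H z) z ≤ lam * δ / (lam - 1) := by
  have hpos : 0 < lam := one_pos.trans hlam
  have hlam_inv : lam⁻¹.toNNReal < 1 := by simpa using inv_lt_one_of_one_lt₀ hlam
  have hS' : AntilipschitzWith lam⁻¹.toNNReal S := .of_le_mul_dist fun x y ↦ by
    rw [Real.coe_toNNReal _ (by positivity)]
    exact (le_inv_mul_iff₀ hpos).2 (hS x y)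
  have hT' : ContractingWith lam⁻¹.toNNReal T := ⟨hlam_inv, .of_dist_le' hT⟩
  obtain ⟨H, hc, hs, hd⟩ := exists_continuous_semiconj_prodMap hS' hT' G
    ENNReal.ofReal_ne_top fun z ↦ (edist_le_ofReal (dist_nonneg.trans (hG z))).2 (hG z)
  refine ⟨H, hc, hs, fun z ↦ ?_⟩
  have hδ : 0 ≤ δ := dist_nonneg.trans (hG z)
  have hbound : 0 ≤ lam * δ / (lam - 1) :=
    div_nonneg (mul_nonneg hpos.le hδ) (sub_nonneg.2 hlam.le)
  rw [← edist_le_ofReal hbound, ← ofReal_div_one_sub_ofReal_inv hlam]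
  exact hd z

/-- a homeomorphism G at uniform distance δ from the split hyperbolic
homeomorphism Φ(a,b) = (S a, T b) admits a continuous semiconjugacy H onto Φ
(H ∘ G = Φ ∘ H) at distance at most λδ/(λ-1) from the identity. -/
theorem split_hyperbolic_semiconjugacy_exists
    {A B : Type*} [MetricSpace A] [CompleteSpace A] [MetricSpace B] [CompleteSpace B]
    (lam : ℝ) (hlam : 1 < lam) (S : Equiv.Perm A) (T : Equiv.Perm B)
    (hS : ∀ x y : A, dist (S x) (S y) = lam * dist x y)
    (hT : ∀ x y : B, dist (T x) (T y) = lam⁻¹ * dist x y)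
    (Φ : Equiv.Perm (A × B)) (hΦ : ∀ p : A × B, Φ p = (S p.1, T p.2))
    (G : (A × B) ≃ₜ (A × B)) (δ : ℝ)
    (hG : ∀ z : A × B, dist (G z) (Φ z) ≤ δ) :
    ∃ H : A × B → A × B, Continuous H ∧ (∀ z, H (G z) = Φ (H z)) ∧
      ∀ z, dist (H z) z ≤ lam * δ / (lam - 1) := by
  rw [show ⇑Φ = Prod.map S T from funext hΦ] at hG ⊢
  exact split_hyperbolic_semiconjugacy_exists_general hlam (fun x y ↦ (hS x y).ge)
    (fun x y ↦ (hT x y).le) G hG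
end

section
/- Let λ > 1, let A and B be complete metric spaces, let S : A → A be a λ-expansion and T : B → B a λ⁻¹-contraction, and let Φ(a, b) = (S a, T b) on A × B with the sup metric. Let G : A × B → A × B be a bijection. If H, H' : A × B → A × B are (not necessarily continuous) maps satisfying H ∘ G = Φ ∘ H, H' ∘ G = Φ ∘ H', sup_z dist(H z, z) < ∞ and sup_z dist(H' z, z) < ∞, then H = H'. -/
/-!
If `H` and `H'` are semiconjugacies at bounded distance from each other, then along a forward orbit
`z, G z, G² z, …` the distance between their `A`-coordinates grows geometrically unless it vanishes,
while for every `n` the distance between their `B`-coordinates at `z = Gⁿ w` has already been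
contracted `n` times from a bounded value. Boundedness forces both to be zero.
-/

open Filter Function
open scoped NNReal ENNReal Topology

theorem eq_of_forall_edist_le_pow_mul {M : Type*} [EMetricSpace M] {K : ℝ≥0} (hK : K < 1)
    {C : ℝ≥0} {x y : M} (h : ∀ n : ℕ, edist x y ≤ (K : ℝ≥0∞) ^ n * C) : x = y := by
  have hlim : Tendsto (fun n : ℕ => (K : ℝ≥0∞) ^ n * C) atTop (𝓝 0) := by
    simpa using ENNReal.Tendsto.mul_const
      (ENNReal.tendsto_pow_atTop_nhds_zero_of_lt_one (ENNReal.coe_lt_one_iff.2 hK))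
      (Or.inr ENNReal.coe_ne_top)
  exact edist_le_zero.1 (ge_of_tendsto' hlim h)

theorem antilipschitzWith_of_mul_dist_le {M N : Type*} [PseudoMetricSpace M] [PseudoMetricSpace N]
    {c : ℝ} (hc : 0 < c) {f : M → N} (h : ∀ x y, c * dist x y ≤ dist (f x) (f y)) :
    AntilipschitzWith c⁻¹.toNNReal f :=
  .of_le_mul_dist fun x y => by
    rw [Real.coe_toNNReal _ (inv_nonneg.2 hc.le)]
    exact (le_inv_mul_iff₀ hc).2 (h x y)

theorem antilipschitzWith_iterate {M : Type*} [PseudoEMetricSpace M] {K : ℝ≥0} {F : M → M}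
    (hF : AntilipschitzWith K F) : ∀ n : ℕ, AntilipschitzWith (K ^ n) F^[n]
  | 0 => by simpa only [pow_zero] using! AntilipschitzWith.id
  | n + 1 => by
    rw [pow_succ', iterate_succ]
    exact (antilipschitzWith_iterate hF n).comp hF

theorem exists_forall_edist_le_of_dist_le {X M : Type*} [PseudoMetricSpace M] {f f' h : X → M}
    (hf : ∃ C : ℝ, ∀ x, dist (f x) (h x) ≤ C) (hf' : ∃ C : ℝ, ∀ x, dist (f' x) (h x) ≤ C) :
    ∃ C : ℝ≥0, ∀ x, edist (f x) (f' x) ≤ C := by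
  obtain ⟨C, hC⟩ := hf
  obtain ⟨C', hC'⟩ := hf'
  refine ⟨(C + C').toNNReal, fun x => ?_⟩
  rw [edist_dist]
  exact ENNReal.ofReal_le_ofReal
    ((dist_triangle_right _ _ (h x)).trans (add_le_add (hC x) (hC' x)))

section Semiconj

variable {X M : Type*} [EMetricSpace M] {K : ℝ≥0} {g : X → X} {F : M → M} {f f' : X → M}

theorem semiconj_unique_of_antilipschitzWith (hK : K < 1) (hF : AntilipschitzWith K F)
    (hf : Semiconj f g F) (hf' : Semiconj f' g F) (hb : ∃ C : ℝ≥0, ∀ x, edist (f x) (f' x) ≤ C) :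
    f = f' := by
  obtain ⟨C, hC⟩ := hb
  refine funext fun x => eq_of_forall_edist_le_pow_mul hK (C := C) fun n => ?_
  calc
    edist (f x) (f' x) ≤ (K : ℝ≥0∞) ^ n * edist (F^[n] (f x)) (F^[n] (f' x)) := by
      simpa only [ENNReal.coe_pow] using antilipschitzWith_iterate hF n (f x) (f' x)
    _ = (K : ℝ≥0∞) ^ n * edist (f (g^[n] x)) (f' (g^[n] x)) := by
      rw [(hf.iterate_right n).eq, (hf'.iterate_right n).eq]
    _ ≤ (K : ℝ≥0∞) ^ n * C := by gcongr; exact hC _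

theorem semiconj_unique_of_contractingWith (hF : ContractingWith K F) (hg : Surjective g)
    (hf : Semiconj f g F) (hf' : Semiconj f' g F) (hb : ∃ C : ℝ≥0, ∀ x, edist (f x) (f' x) ≤ C) :
    f = f' := by
  obtain ⟨C, hC⟩ := hb
  refine funext fun x => eq_of_forall_edist_le_pow_mul hF.1 (C := C) fun n => ?_
  obtain ⟨w, rfl⟩ := hg.iterate n x
  calc
    edist (f (g^[n] w)) (f' (g^[n] w)) = edist (F^[n] (f w)) (F^[n] (f' w)) := by
      rw [(hf.iterate_right n).eq, (hf'.iterate_right n).eq]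
    _ ≤ (K : ℝ≥0∞) ^ n * edist (f w) (f' w) := by
      simpa only [ENNReal.coe_pow] using hF.toLipschitzWith.iterate n (f w) (f' w)
    _ ≤ (K : ℝ≥0∞) ^ n * C := by gcongr; exact hC _

end Semiconj

theorem split_hyperbolic_semiconjugacy_unique_general {X A B : Type*} [EMetricSpace A]
    [EMetricSpace B] {K L : ℝ≥0} {S : A → A} {T : B → B} (hK : K < 1) (hS : AntilipschitzWith K S)
    (hT : ContractingWith L T) {G : X → X} (hG : Surjective G) {H H' : X → A × B}
    (hH : Semiconj H G (Prod.map S T)) (hH' : Semiconj H' G (Prod.map S T))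
    (hb : ∃ C : ℝ≥0, ∀ x, edist (H x) (H' x) ≤ C) : H = H' := by
  obtain ⟨C, hC⟩ := hb
  have hfst : Prod.fst ∘ H = Prod.fst ∘ H' :=
    semiconj_unique_of_antilipschitzWith hK hS (fun x => congrArg Prod.fst (hH x))
      (fun x => congrArg Prod.fst (hH' x)) ⟨C, fun x => (le_max_left _ _).trans (hC x)⟩
  have hsnd : Prod.snd ∘ H = Prod.snd ∘ H' :=
    semiconj_unique_of_contractingWith hT hG (fun x => congrArg Prod.snd (hH x))
      (fun x => congrArg Prod.snd (hH' x)) ⟨C, fun x => (le_max_right _ _).trans (hC x)⟩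
  exact funext fun x => Prod.ext (congrFun hfst x) (congrFun hsnd x)

/-- uniqueness of the semiconjugacy at bounded distance from the identity:
if H and H' both semiconjugate a bijection G to the split hyperbolic homeomorphism Φ
and both stay at bounded distance from the identity, then H = H'. -/
theorem split_hyperbolic_semiconjugacy_unique
    {A B : Type*} [MetricSpace A] [CompleteSpace A] [MetricSpace B] [CompleteSpace B]
    (lam : ℝ) (hlam : 1 < lam) (S : Equiv.Perm A) (T : Equiv.Perm B)
    (hS : ∀ x y : A, dist (S x) (S y) = lam * dist x y)
    (hT : ∀ x y : B, dist (T x) (T y) = lam⁻¹ * dist x y)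
    (Φ : Equiv.Perm (A × B)) (hΦ : ∀ p : A × B, Φ p = (S p.1, T p.2))
    (G : Equiv.Perm (A × B)) (H H' : A × B → A × B)
    (hH : ∀ z, H (G z) = Φ (H z)) (hH' : ∀ z, H' (G z) = Φ (H' z))
    (hHb : ∃ C : ℝ, ∀ z, dist (H z) z ≤ C)
    (hH'b : ∃ C : ℝ, ∀ z, dist (H' z) z ≤ C) :
    H = H' := by
  have hK : lam⁻¹.toNNReal < 1 := Real.toNNReal_lt_one.2 (inv_lt_one_of_one_lt₀ hlam)
  exact split_hyperbolic_semiconjugacy_unique_general hK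
    (antilipschitzWith_of_mul_dist_le (zero_lt_one.trans hlam) fun x y => (hS x y).ge)
    ⟨hK, .of_dist_le' fun x y => (hT x y).le⟩ G.surjective
    (fun z => (hH z).trans (hΦ _)) (fun z => (hH' z).trans (hΦ _))
    (exists_forall_edist_le_of_dist_le hHb hH'b)
end

section
/- Let λ > 1, let A and B be complete metric spaces, let S : A → A be a λ-expansion and T : B → B a λ⁻¹-contraction, and let Φ(a, b) = (S a, T b) on A × B with the sup metric. Let G : A × B → A × B be a bijection and H : A × B → A × B a map with H ∘ G = Φ ∘ H and sup_z dist(H z, z) < ∞. Then for all z, z' ∈ A × B: H z = H z' if and only if sup_{n∈ℤ} dist(Gⁿ z, Gⁿ z') < ∞. -/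
/-!
A semiconjugacy `φ` from `f` to `g` carries `f`-orbits to `g`-orbits, so if it distorts distances
by a bounded additive amount, then `x` and `y` are globally shadowed under `f` exactly when `φ x`
and `φ y` are globally shadowed under `g`. For `H` this reduces the question to the product map
`Φ`, where distinct points are never globally shadowed: forward iterates separate the
`A`-coordinates at a geometric rate, and backward iterates separate the `B`-coordinates.
-/

open Function

section Semiconj

variable {X Y : Type*} {f : Equiv.Perm X} {g : Equiv.Perm Y} {φ : X → Y}

theorem semiconj_perm_inv (h : Semiconj φ f g) :
    Semiconj φ (f⁻¹ : Equiv.Perm X) (g⁻¹ : Equiv.Perm Y) :=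
  h.inverses_right f.right_inv g.left_inv

theorem semiconj_perm_zpow (h : Semiconj φ f g) (n : ℤ) :
    Semiconj φ (f ^ n : Equiv.Perm X) (g ^ n : Equiv.Perm Y) := by
  cases n with
  | ofNat n => exact h.iterate_right n
  | negSucc n =>
    simp only [zpow_negSucc, ← inv_pow]
    exact (semiconj_perm_inv h).iterate_right (n + 1)

end Semiconj

/-- Global shadowing of orbits: the full orbits of `x` and `y` under the bijection `f` stay at
uniformly bounded distance, over negative as well as positive times. -/
def GloballyShadowed {X : Type*} [PseudoMetricSpace X] (f : Equiv.Perm X) (x y : X) : Prop :=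
  ∃ C : ℝ, ∀ n : ℤ, dist ((f ^ n) x) ((f ^ n) y) ≤ C

namespace GloballyShadowed

variable {X Y : Type*} [PseudoMetricSpace X] [PseudoMetricSpace Y]
  {f : Equiv.Perm X} {g : Equiv.Perm Y} {φ : X → Y} {C : ℝ} {x y : X}

theorem refl (f : Equiv.Perm X) (x : X) : GloballyShadowed f x x :=
  ⟨0, fun _ => (dist_self _).le⟩

theorem inv (h : GloballyShadowed f x y) : GloballyShadowed f⁻¹ x y := by
  obtain ⟨D, hD⟩ := h
  refine ⟨D, fun n => ?_⟩
  rw [inv_zpow']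
  exact hD (-n)

theorem map (hφ : Semiconj φ f g) (hC : ∀ x y, dist (φ x) (φ y) ≤ dist x y + C)
    (h : GloballyShadowed f x y) : GloballyShadowed g (φ x) (φ y) := by
  obtain ⟨D, hD⟩ := h
  refine ⟨D + C, fun n => ?_⟩
  rw [← semiconj_perm_zpow hφ n, ← semiconj_perm_zpow hφ n]
  exact (hC _ _).trans (by gcongr; exact hD n)

theorem of_map (hφ : Semiconj φ f g) (hC : ∀ x y, dist x y ≤ dist (φ x) (φ y) + C)
    (h : GloballyShadowed g (φ x) (φ y)) : GloballyShadowed f x y := by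
  obtain ⟨D, hD⟩ := h
  refine ⟨D + C, fun n => (hC _ _).trans ?_⟩
  rw [semiconj_perm_zpow hφ n, semiconj_perm_zpow hφ n]
  gcongr
  exact hD n

theorem map_iff (hφ : Semiconj φ f g) (hC : ∀ x y, |dist (φ x) (φ y) - dist x y| ≤ C) :
    GloballyShadowed g (φ x) (φ y) ↔ GloballyShadowed f x y :=
  ⟨of_map hφ fun x y => by linarith [(abs_le.1 (hC x y)).1],
    map hφ fun x y => by linarith [(abs_le.1 (hC x y)).2]⟩

theorem fst {p q : X × Y} (h : GloballyShadowed (f.prodCongr g) p q) :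
    GloballyShadowed f p.1 q.1 :=
  h.map (φ := Prod.fst) (C := 0) (fun _ => rfl) fun p q => by
    rw [add_zero, Prod.dist_eq]
    exact le_max_left _ _

theorem snd {p q : X × Y} (h : GloballyShadowed (f.prodCongr g) p q) :
    GloballyShadowed g p.2 q.2 :=
  h.map (φ := Prod.snd) (C := 0) (fun _ => rfl) fun p q => by
    rw [add_zero, Prod.dist_eq]
    exact le_max_right _ _

end GloballyShadowed

theorem pow_mul_dist_le_dist_iterate {X : Type*} [PseudoMetricSpace X] {f : X → X} {lam : ℝ}
    (hlam : 0 ≤ lam) (hf : ∀ x y, lam * dist x y ≤ dist (f x) (f y)) (n : ℕ) (x y : X) :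
    lam ^ n * dist x y ≤ dist (f^[n] x) (f^[n] y) := by
  induction n with
  | zero => simp
  | succ n ih =>
    calc lam ^ (n + 1) * dist x y = lam * (lam ^ n * dist x y) := by ring
      _ ≤ lam * dist (f^[n] x) (f^[n] y) := by gcongr
      _ ≤ dist (f^[n + 1] x) (f^[n + 1] y) := by
        simpa only [iterate_succ_apply'] using hf (f^[n] x) (f^[n] y)

theorem mul_dist_le_dist_inv_of_dist_le_inv_mul {X : Type*} [PseudoMetricSpace X]
    {f : Equiv.Perm X} {lam : ℝ} (hlam : 0 < lam)
    (hf : ∀ x y, dist (f x) (f y) ≤ lam⁻¹ * dist x y) (x y : X) :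
    lam * dist x y ≤ dist (f⁻¹ x) (f⁻¹ y) := by
  simpa [le_inv_mul_iff₀ hlam] using hf (f⁻¹ x) (f⁻¹ y)

namespace GloballyShadowed

theorem eq_of_expanding {X : Type*} [MetricSpace X] {f : Equiv.Perm X} {lam : ℝ} (hlam : 1 < lam)
    (hf : ∀ x y, lam * dist x y ≤ dist (f x) (f y)) {x y : X} (h : GloballyShadowed f x y) :
    x = y := by
  obtain ⟨D, hD⟩ := h
  by_contra hxy
  obtain ⟨n, hn⟩ := pow_unbounded_of_one_lt (D / dist x y) hlam
  have hlarge : D < lam ^ n * dist x y := (div_lt_iff₀ (dist_pos.2 hxy)).1 hn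
  have hgrowth := pow_mul_dist_le_dist_iterate (zero_le_one.trans hlam.le) hf n x y
  exact (hlarge.trans_le hgrowth).not_ge (hD n)

theorem eq_of_contracting {X : Type*} [MetricSpace X] {f : Equiv.Perm X} {lam : ℝ}
    (hlam : 1 < lam) (hf : ∀ x y, dist (f x) (f y) ≤ lam⁻¹ * dist x y) {x y : X}
    (h : GloballyShadowed f x y) : x = y :=
  h.inv.eq_of_expanding hlam
    (mul_dist_le_dist_inv_of_dist_le_inv_mul (zero_lt_one.trans hlam) hf)

end GloballyShadowed

theorem globallyShadowed_prodCongr_iff_eq {A B : Type*} [MetricSpace A] [MetricSpace B]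
    {S : Equiv.Perm A} {T : Equiv.Perm B} {lam : ℝ} (hlam : 1 < lam)
    (hS : ∀ x y, lam * dist x y ≤ dist (S x) (S y))
    (hT : ∀ x y, dist (T x) (T y) ≤ lam⁻¹ * dist x y) {p q : A × B} :
    GloballyShadowed (S.prodCongr T) p q ↔ p = q := by
  refine ⟨fun h => ?_, fun h => h ▸ .refl _ p⟩
  exact Prod.ext (h.fst.eq_of_expanding hlam hS) (h.snd.eq_of_contracting hlam hT)

theorem semiconjugacy_fibers_are_global_shadowing_classes_general
    {X A B : Type*} [PseudoMetricSpace X] [MetricSpace A] [MetricSpace B] {lam : ℝ}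
    (hlam : 1 < lam) {S : Equiv.Perm A} {T : Equiv.Perm B}
    (hS : ∀ x y, lam * dist x y ≤ dist (S x) (S y))
    (hT : ∀ x y, dist (T x) (T y) ≤ lam⁻¹ * dist x y)
    {G : Equiv.Perm X} {H : X → A × B} (hH : Semiconj H G (S.prodCongr T))
    {C : ℝ} (hC : ∀ z z', |dist (H z) (H z') - dist z z'| ≤ C) (z z' : X) :
    H z = H z' ↔ GloballyShadowed G z z' :=
  (globallyShadowed_prodCongr_iff_eq hlam hS hT).symm.trans (GloballyShadowed.map_iff hH hC)

/-- the fibers of the shadowing semiconjugacy H (H ∘ G = Φ ∘ H, H at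
bounded distance from the identity) are exactly the global shadowing classes of the
bijection G: H z = H z' iff the G-orbits of z and z' stay at uniformly bounded
distance for all n ∈ ℤ. -/
theorem semiconjugacy_fibers_are_global_shadowing_classes
    {A B : Type*} [MetricSpace A] [CompleteSpace A] [MetricSpace B] [CompleteSpace B]
    (lam : ℝ) (hlam : 1 < lam) (S : Equiv.Perm A) (T : Equiv.Perm B)
    (hS : ∀ x y : A, dist (S x) (S y) = lam * dist x y)
    (hT : ∀ x y : B, dist (T x) (T y) = lam⁻¹ * dist x y)
    (Φ : Equiv.Perm (A × B)) (hΦ : ∀ p : A × B, Φ p = (S p.1, T p.2))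
    (G : Equiv.Perm (A × B)) (H : A × B → A × B)
    (hH : ∀ z, H (G z) = Φ (H z))
    (hHb : ∃ C : ℝ, ∀ z, dist (H z) z ≤ C) :
    ∀ z z' : A × B,
      H z = H z' ↔ ∃ C : ℝ, ∀ n : ℤ, dist ((G ^ n) z) ((G ^ n) z') ≤ C := by
  obtain ⟨C, hC⟩ := hHb
  obtain rfl : Φ = S.prodCongr T := Equiv.ext hΦ
  exact semiconjugacy_fibers_are_global_shadowing_classes_general hlam (fun x y => (hS x y).ge)
    (fun x y => (hT x y).le) hH fun z z' =>
      (dist_dist_dist_le _ _ _ _).trans (add_le_add (hC z) (hC z'))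
end

section
/- Let λ > 1, let A and B be complete metric spaces, let S : A → A be a λ-expansion and T : B → B a λ⁻¹-contraction, and let Φ(a, b) = (S a, T b) on A × B with the sup metric. Let G : A × B → A × B be a homeomorphism with sup_z dist(G z, Φ z) < ∞, and let H be the unique map with H ∘ G = Φ ∘ H and sup_z dist(H z, z) < ∞. If I : A × B → A × B is a bijective isometry satisfying I ∘ Φ = Φ ∘ I and I ∘ G = G ∘ I, then I ∘ H = H ∘ I. -/
/-! `I ∘ H` and `H ∘ I` both semiconjugate `G` to `Φ` and stay at bounded distance from each other,
so it suffices that such a semiconjugacy is unique. Its first coordinates are compared along the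
forward orbit of a point, where the expansion `S` would blow up any discrepancy; its second
coordinates are compared along a backward orbit, since the contraction `T` has shrunk a bounded
discrepancy in the distant past by an arbitrarily small factor. -/

open Filter Function Topology
open scoped NNReal

theorem eq_of_forall_dist_le_pow_mul {X : Type*} [MetricSpace X] {x y : X} {r C : ℝ}
    (hr₀ : 0 ≤ r) (hr₁ : r < 1) (h : ∀ n : ℕ, dist x y ≤ r ^ n * C) : x = y := by
  have hlim : Tendsto (fun n : ℕ => r ^ n * C) atTop (𝓝 0) := by
    simpa only [zero_mul] using (tendsto_pow_atTop_nhds_zero_of_lt_one hr₀ hr₁).mul_const C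
  exact dist_le_zero.mp (ge_of_tendsto' hlim h)

theorem antilipschitzWith_of_mul_dist_le_s7 {X Y : Type*} [PseudoMetricSpace X] [PseudoMetricSpace Y]
    {lam : ℝ} (hlam : 0 < lam) {f : X → Y} (hf : ∀ x y, lam * dist x y ≤ dist (f x) (f y)) :
    AntilipschitzWith lam⁻¹.toNNReal f :=
  AntilipschitzWith.of_le_mul_dist fun x y => by
    rw [Real.coe_toNNReal _ (inv_nonneg.mpr hlam.le)]
    exact (le_inv_mul_iff₀ hlam).mpr (hf x y)

theorem antilipschitzWith_iterate_s7 {X : Type*} [PseudoEMetricSpace X] {K : ℝ≥0} {f : X → X}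
    (hf : AntilipschitzWith K f) (n : ℕ) : AntilipschitzWith (K ^ n) f^[n] := by
  induction n with
  | zero => simpa only [pow_zero, iterate_zero] using AntilipschitzWith.id
  | succ n ih => simpa only [pow_succ, iterate_succ'] using hf.comp ih

section UniquenessOfSemiconjugacy

variable {X A B : Type*} [MetricSpace A] [MetricSpace B] {K L : ℝ≥0} {S : A → A} {T : B → B}
  {g : X → X}

theorem eq_of_semiconj_antilipschitzWith {h k : X → A} (hS : AntilipschitzWith K S) (hK : K < 1)
    (hh : Semiconj h g S) (hk : Semiconj k g S) (hC : ∃ C, ∀ x, dist (h x) (k x) ≤ C) :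
    h = k := by
  obtain ⟨C, hC⟩ := hC
  refine funext fun x => eq_of_forall_dist_le_pow_mul (C := C) K.coe_nonneg hK fun n => ?_
  calc dist (h x) (k x)
      ≤ K ^ n * dist (S^[n] (h x)) (S^[n] (k x)) := by
        exact_mod_cast (antilipschitzWith_iterate_s7 hS n).le_mul_dist (h x) (k x)
    _ = K ^ n * dist (h (g^[n] x)) (k (g^[n] x)) := by
        rw [hh.iterate_right n x, hk.iterate_right n x]
    _ ≤ K ^ n * C := by gcongr; exact hC _

theorem eq_of_semiconj_contractingWith {h k : X → B} (hT : ContractingWith K T)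
    (hg : Surjective g) (hh : Semiconj h g T) (hk : Semiconj k g T)
    (hC : ∃ C, ∀ x, dist (h x) (k x) ≤ C) : h = k := by
  obtain ⟨C, hC⟩ := hC
  refine funext fun x => eq_of_forall_dist_le_pow_mul (C := C) K.coe_nonneg hT.1 fun n => ?_
  obtain ⟨w, rfl⟩ := hg.iterate n x
  calc dist (h (g^[n] w)) (k (g^[n] w))
      = dist (T^[n] (h w)) (T^[n] (k w)) := by
        rw [hh.iterate_right n w, hk.iterate_right n w]
    _ ≤ K ^ n * dist (h w) (k w) := by
        exact_mod_cast (hT.2.iterate n).dist_le_mul (h w) (k w)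
    _ ≤ K ^ n * C := by gcongr; exact hC w

theorem eq_of_semiconj_prodMap {h k : X → A × B} (hS : AntilipschitzWith K S) (hK : K < 1)
    (hT : ContractingWith L T) (hg : Surjective g)
    (hh : Semiconj h g (Prod.map S T)) (hk : Semiconj k g (Prod.map S T))
    (hC : ∃ C, ∀ x, dist (h x) (k x) ≤ C) : h = k := by
  obtain ⟨C, hC⟩ := hC
  have hfst : Semiconj Prod.fst (Prod.map S T) S := fun _ => rfl
  have hsnd : Semiconj Prod.snd (Prod.map S T) T := fun _ => rfl
  have h_fst : Prod.fst ∘ h = Prod.fst ∘ k :=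
    eq_of_semiconj_antilipschitzWith hS hK (hfst.comp_left hh) (hfst.comp_left hk)
      ⟨C, fun x => (le_max_left _ _).trans (hC x)⟩
  have h_snd : Prod.snd ∘ h = Prod.snd ∘ k :=
    eq_of_semiconj_contractingWith hT hg (hsnd.comp_left hh) (hsnd.comp_left hk)
      ⟨C, fun x => (le_max_right _ _).trans (hC x)⟩
  exact funext fun x => Prod.ext (congrFun h_fst x) (congrFun h_snd x)

end UniquenessOfSemiconjugacy

theorem dist_apply_comm_le_of_lipschitzWith {X : Type*} [PseudoMetricSpace X] {M : ℝ≥0} {C : ℝ}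
    {H I : X → X} (hI : LipschitzWith M I) (hH : ∀ z, dist (H z) z ≤ C) (z : X) :
    dist (I (H z)) (H (I z)) ≤ M * C + C :=
  calc dist (I (H z)) (H (I z))
      ≤ dist (I (H z)) (I z) + dist (H (I z)) (I z) := dist_triangle_right _ _ _
    _ ≤ M * C + C := add_le_add (hI.dist_le_mul_of_le (hH z)) (hH (I z))

theorem semiconjugacy_equivariance_general {A B : Type*} [MetricSpace A] [MetricSpace B]
    {K L M : ℝ≥0} {S : A → A} {T : B → B} {G H I : A × B → A × B}
    (hS : AntilipschitzWith K S) (hK : K < 1) (hT : ContractingWith L T) (hG : Surjective G)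
    (hH : Semiconj H G (Prod.map S T)) (hHb : ∃ C, ∀ z, dist (H z) z ≤ C)
    (hI : LipschitzWith M I) (hIΦ : Function.Commute I (Prod.map S T))
    (hIG : Function.Commute I G) : Function.Commute I H := by
  obtain ⟨C, hC⟩ := hHb
  have hIH : I ∘ H = H ∘ I :=
    eq_of_semiconj_prodMap hS hK hT hG (hIΦ.semiconj.comp_left hH)
      (hH.comp_left hIG.semiconj) ⟨M * C + C, dist_apply_comm_le_of_lipschitzWith hI hC⟩
  exact congrFun hIH

/-- equivariance of the shadowing semiconjugacy: if a bijective isometry I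
commutes with both the split hyperbolic homeomorphism Φ and the homeomorphism G (at
bounded distance from Φ), then I commutes with the semiconjugacy H (the unique map
with H ∘ G = Φ ∘ H at bounded distance from the identity). -/
theorem semiconjugacy_equivariance
    {A B : Type*} [MetricSpace A] [CompleteSpace A] [MetricSpace B] [CompleteSpace B]
    (lam : ℝ) (hlam : 1 < lam) (S : Equiv.Perm A) (T : Equiv.Perm B)
    (hS : ∀ x y : A, dist (S x) (S y) = lam * dist x y)
    (hT : ∀ x y : B, dist (T x) (T y) = lam⁻¹ * dist x y)
    (Φ : Equiv.Perm (A × B)) (hΦ : ∀ p : A × B, Φ p = (S p.1, T p.2))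
    (G : (A × B) ≃ₜ (A × B))
    (hG : ∃ δ : ℝ, ∀ z : A × B, dist (G z) (Φ z) ≤ δ)
    (H : A × B → A × B)
    (hH : ∀ z, H (G z) = Φ (H z))
    (hHb : ∃ C : ℝ, ∀ z, dist (H z) z ≤ C)
    (I : Equiv.Perm (A × B)) (hI : Isometry I)
    (hIΦ : ∀ z, I (Φ z) = Φ (I z)) (hIG : ∀ z, I (G z) = G (I z)) :
    ∀ z, I (H z) = H (I z) := by
  have hΦ_eq : ⇑Φ = Prod.map S T := funext hΦ
  have hK : lam⁻¹.toNNReal < 1 := Real.toNNReal_lt_one.mpr (inv_lt_one_of_one_lt₀ hlam)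
  exact semiconjugacy_equivariance_general
    (antilipschitzWith_of_mul_dist_le_s7 (zero_lt_one.trans hlam) fun x y => (hS x y).ge) hK
    ⟨hK, LipschitzWith.of_dist_le' fun x y => (hT x y).le⟩ G.surjective
    (hΦ_eq ▸ hH) hHb hI.lipschitz (hΦ_eq ▸ hIΦ) hIG
end

section
/- Let λ > 1, let A and B be complete metric spaces, let S : A → A be a λ-expansion and T : B → B a λ⁻¹-contraction, and let Φ(a, b) = (S a, T b) on A × B with the sup metric. Let G, G' : A × B → A × B be homeomorphisms with sup_z dist(G z, Φ z) < ∞ and sup_z dist(G' z, Φ z) < ∞, and let H, H' be the unique maps with H ∘ G = Φ ∘ H, H' ∘ G' = Φ ∘ H', sup_z dist(H z, z) < ∞ and sup_z dist(H' z, z) < ∞. If h : A × B → A × B is a surjective map with sup_z dist(h z, z) < ∞ and h ∘ G = G' ∘ h, then H = H' ∘ h, and consequently range(H) = range(H'). -/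
/-!
Both `H` and `H' ∘ h` semiconjugate `G` to `S × T` and lie at bounded distance from the identity,
hence from each other. At any point, the distance between their `A`-coordinates is at most a fixed
fraction of its value one step forward along the `G`-orbit, and the distance between their
`B`-coordinates is at most a fixed fraction of its value one step backward. A bounded function with
this property has supremum at most `0`, so both distances vanish.
-/

open Function Set
open scoped NNReal

theorem nonpos_of_forall_exists_le_mul {X : Type*} {f : X → ℝ} {K : ℝ} (hf : BddAbove (range f))
    (hK₀ : 0 ≤ K) (hK₁ : K < 1) (h : ∀ x, ∃ y, f x ≤ K * f y) (x : X) : f x ≤ 0 := by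
  have : Nonempty X := ⟨x⟩
  have hsup : (⨆ x, f x) ≤ K * ⨆ x, f x := ciSup_le fun x ↦
    let ⟨y, hy⟩ := h x
    hy.trans (mul_le_mul_of_nonneg_left (le_ciSup hf y) hK₀)
  exact (le_ciSup hf x).trans (by nlinarith)

/-- Two maps into a metric space are at bounded distance if their uniform distance is finite; this
replaces homotopy of maps when one passes to lifts to the universal cover. It is stated with an
explicit bound because a supremum of reals is `0` on unbounded families. -/
def AtBoundedDist {X Y : Type*} [PseudoMetricSpace Y] (f g : X → Y) : Prop :=
  ∃ C : ℝ, ∀ x, dist (f x) (g x) ≤ C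

namespace AtBoundedDist

variable {X Y Z : Type*} [PseudoMetricSpace Y] [PseudoMetricSpace Z] {f g k : X → Y}

protected theorem symm (hfg : AtBoundedDist f g) : AtBoundedDist g f :=
  let ⟨C, hC⟩ := hfg
  ⟨C, fun x ↦ (dist_comm _ _).trans_le (hC x)⟩

protected theorem trans (hfg : AtBoundedDist f g) (hgk : AtBoundedDist g k) : AtBoundedDist f k :=
  let ⟨C, hC⟩ := hfg
  let ⟨D, hD⟩ := hgk
  ⟨C + D, fun x ↦ dist_triangle _ (g x) _ |>.trans (add_le_add (hC x) (hD x))⟩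

theorem comp_right (hfg : AtBoundedDist f g) {W : Type*} (h : W → X) :
    AtBoundedDist (f ∘ h) (g ∘ h) :=
  let ⟨C, hC⟩ := hfg
  ⟨C, fun w ↦ hC (h w)⟩

theorem lipschitz_comp (hfg : AtBoundedDist f g) {K : ℝ≥0} {φ : Y → Z} (hφ : LipschitzWith K φ) :
    AtBoundedDist (φ ∘ f) (φ ∘ g) :=
  let ⟨C, hC⟩ := hfg
  ⟨K * C, fun x ↦ hφ.dist_le_mul_of_le (hC x)⟩

theorem bddAbove_range_dist (hfg : AtBoundedDist f g) :
    BddAbove (range fun x ↦ dist (f x) (g x)) :=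
  let ⟨C, hC⟩ := hfg
  ⟨C, forall_mem_range.mpr hC⟩

end AtBoundedDist

section Uniqueness

variable {X Y : Type*} [MetricSpace Y] {G : X → X} {F : Y → Y} {u v : X → Y} {K : ℝ≥0}

theorem AtBoundedDist.eq_of_forall_exists_dist_le_mul (huv : AtBoundedDist u v) (hK : K < 1)
    (h : ∀ x, ∃ y, dist (u x) (v x) ≤ K * dist (u y) (v y)) : u = v :=
  funext fun x ↦ dist_le_zero.mp <|
    nonpos_of_forall_exists_le_mul huv.bddAbove_range_dist K.coe_nonneg hK h x

theorem AtBoundedDist.eq_of_semiconj_of_antilipschitzWith (huv : AtBoundedDist u v) (hK : K < 1)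
    (hF : AntilipschitzWith K F) (hu : Semiconj u G F) (hv : Semiconj v G F) : u = v :=
  huv.eq_of_forall_exists_dist_le_mul hK fun x ↦
    ⟨G x, by simpa only [hu x, hv x] using hF.le_mul_dist (u x) (v x)⟩

theorem AtBoundedDist.eq_of_semiconj_of_contractingWith (huv : AtBoundedDist u v)
    (hF : ContractingWith K F) (hG : Surjective G) (hu : Semiconj u G F) (hv : Semiconj v G F) :
    u = v :=
  huv.eq_of_forall_exists_dist_le_mul hF.1 <| hG.forall.mpr fun x ↦
    ⟨x, by simpa only [hu x, hv x] using hF.2.dist_le_mul (u x) (v x)⟩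

end Uniqueness

theorem antilipschitzWith_inv_of_dist_eq_mul {X Y : Type*} [PseudoMetricSpace X]
    [PseudoMetricSpace Y] {f : X → Y} {r : ℝ≥0} (hr : r ≠ 0)
    (hf : ∀ x y, dist (f x) (f y) = r * dist x y) : AntilipschitzWith r⁻¹ f :=
  .of_le_mul_dist fun x y ↦ by
    rw [hf, NNReal.coe_inv, inv_mul_cancel_left₀ (NNReal.coe_ne_zero.mpr hr)]

section Hyperbolic

variable {A B : Type*} [MetricSpace A] [MetricSpace B] {S : A → A} {T : B → B} {K L : ℝ≥0}

theorem AtBoundedDist.eq_of_semiconj_prodMap {X : Type*} {G : X → X} {u v : X → A × B}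
    (huv : AtBoundedDist u v) (hK : K < 1) (hS : AntilipschitzWith K S) (hT : ContractingWith L T)
    (hG : Surjective G) (hu : Semiconj u G (Prod.map S T)) (hv : Semiconj v G (Prod.map S T)) :
    u = v := by
  have hfst : Semiconj Prod.fst (Prod.map S T) S := fun _ ↦ rfl
  have hsnd : Semiconj Prod.snd (Prod.map S T) T := fun _ ↦ rfl
  have heq_fst : Prod.fst ∘ u = Prod.fst ∘ v :=
    (huv.lipschitz_comp LipschitzWith.prod_fst).eq_of_semiconj_of_antilipschitzWith hK hS
      (hfst.comp_left hu) (hfst.comp_left hv)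
  have heq_snd : Prod.snd ∘ u = Prod.snd ∘ v :=
    (huv.lipschitz_comp LipschitzWith.prod_snd).eq_of_semiconj_of_contractingWith hT hG
      (hsnd.comp_left hu) (hsnd.comp_left hv)
  exact funext fun x ↦ Prod.ext (congrFun heq_fst x) (congrFun heq_snd x)

theorem semiconjugate_maps_same_L_general {G G' H H' h : A × B → A × B} (hK : K < 1)
    (hS : AntilipschitzWith K S) (hT : ContractingWith L T) (hG : Surjective G)
    (hH : Semiconj H G (Prod.map S T)) (hH' : Semiconj H' G' (Prod.map S T))
    (hHb : AtBoundedDist H id) (hH'b : AtBoundedDist H' id) (hsurj : Surjective h)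
    (hb : AtBoundedDist h id) (hsemi : Semiconj h G G') :
    H = H' ∘ h ∧ range H = range H' := by
  have hbdd : AtBoundedDist H (H' ∘ h) := hHb.trans ((hH'b.comp_right h).trans hb).symm
  have heq : H = H' ∘ h :=
    hbdd.eq_of_semiconj_prodMap hK hS hT hG hH (hH'.comp_left hsemi)
  exact ⟨heq, by rw [heq, hsurj.range_comp]⟩

end Hyperbolic

/-- universal-cover form of Corollary 1.3: if h is a surjective
semiconjugacy from G to G' at bounded distance from the identity, and H, H' are the
shadowing semiconjugacies from G, G' to the split hyperbolic homeomorphism Φ, then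
H = H' ∘ h; consequently range H = range H'. -/
theorem semiconjugate_maps_same_L
    {A B : Type*} [MetricSpace A] [CompleteSpace A] [MetricSpace B] [CompleteSpace B]
    (lam : ℝ) (hlam : 1 < lam) (S : Equiv.Perm A) (T : Equiv.Perm B)
    (hS : ∀ x y : A, dist (S x) (S y) = lam * dist x y)
    (hT : ∀ x y : B, dist (T x) (T y) = lam⁻¹ * dist x y)
    (Φ : Equiv.Perm (A × B)) (hΦ : ∀ p : A × B, Φ p = (S p.1, T p.2))
    (G G' : (A × B) ≃ₜ (A × B))
    (hG : ∃ δ : ℝ, ∀ z : A × B, dist (G z) (Φ z) ≤ δ)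
    (hG' : ∃ δ : ℝ, ∀ z : A × B, dist (G' z) (Φ z) ≤ δ)
    (H H' : A × B → A × B)
    (hH : ∀ z, H (G z) = Φ (H z)) (hH' : ∀ z, H' (G' z) = Φ (H' z))
    (hHb : ∃ C : ℝ, ∀ z, dist (H z) z ≤ C)
    (hH'b : ∃ C : ℝ, ∀ z, dist (H' z) z ≤ C)
    (h : A × B → A × B) (hsurj : Function.Surjective h)
    (hb : ∃ C : ℝ, ∀ z, dist (h z) z ≤ C)
    (hsemi : ∀ z, h (G z) = G' (h z)) :
    H = H' ∘ h ∧ Set.range H = Set.range H' := by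
  lift lam to ℝ≥0 using (zero_lt_one.trans hlam).le
  rw [NNReal.one_lt_coe] at hlam
  have hinv : lam⁻¹ < 1 := inv_lt_one_of_one_lt₀ hlam
  exact semiconjugate_maps_same_L_general hinv
    (antilipschitzWith_inv_of_dist_eq_mul (zero_lt_one.trans hlam).ne' hS)
    ⟨hinv, .of_dist_le_mul fun x y ↦ (hT x y).le⟩ G.surjective
    (fun z ↦ (hH z).trans (hΦ _)) (fun z ↦ (hH' z).trans (hΦ _)) hHb hH'b hsurj hb hsemi
end

section
/- Let λ > 1, let A and B be complete metric spaces, let S : A → A be a λ-expansion and T : B → B a λ⁻¹-contraction, and let Φ(a, b) = (S a, T b) on A × B with the sup metric. Let δ > 0, let G and G_k (k ∈ ℕ) be homeomorphisms of A × B with sup_z dist(G z, Φ z) ≤ δ and sup_z dist(G_k z, Φ z) ≤ δ for all k, and suppose G_k → G and G_k⁻¹ → G⁻¹ uniformly as k → ∞. Let H and H_k be the unique maps satisfying H ∘ G = Φ ∘ H, H_k ∘ G_k = Φ ∘ H_k, sup_z dist(H z, z) < ∞ and sup_z dist(H_k z, z) < ∞. Then H_k z → H z for every z ∈ A × B. 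-/
open Filter Topology

/-!
Project to a factor by `p`. The distance from `h = p ∘ H` to `p` obeys a contracting recursion,
forwards along the orbits of `G` in the expanding factor and backwards in the contracting one. So
finiteness of `dist (H z) z` already forces a bound depending only on the contraction rate `c` and
on `δ`, and this bound is common to all `Hk`.

In the expanding factor the distance between `H z` and `Hk z` is at most `c ^ n` times the distance
between `H (G^[n] z)` and `Hk (Gk^[n] z)`. Since `Gk^[n] z → G^[n] z`, for `k` large depending on
`n` the latter is at most a constant that does not depend on `n`. Choosing first `n` and then `k`
gives convergence. In the contracting factor the same works with the inverses of `G` and `Gk`.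
-/

open Function Set
open scoped NNReal

section Contraction

variable {X : Type*}

lemma le_div_one_sub_of_le_mul_comp_add {a : X → ℝ} {F : X → X} {c d C : ℝ}
    (hc0 : 0 ≤ c) (hc1 : c < 1) (hC : ∀ x, a x ≤ C) (ha : ∀ x, a x ≤ c * a (F x) + d) (x : X) :
    a x ≤ d / (1 - c) := by
  have : Nonempty X := ⟨x⟩
  have hbdd : BddAbove (range a) := ⟨C, forall_mem_range.2 hC⟩
  have hsup : ⨆ y, a y ≤ c * (⨆ y, a y) + d := ciSup_le fun y => (ha y).trans <| by
    gcongr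
    exact le_ciSup hbdd (F y)
  refine (le_ciSup hbdd x).trans ?_
  rw [le_div_iff₀ (sub_pos.2 hc1)]
  linarith

lemma dist_le_pow_mul_dist_iterate {Y : Type*} [PseudoMetricSpace Y] {F F' : X → X}
    {h h' : X → Y} {c : ℝ} (hc : 0 ≤ c)
    (hcontr : ∀ x y, dist (h x) (h' y) ≤ c * dist (h (F x)) (h' (F' y))) (n : ℕ) (x y : X) :
    dist (h x) (h' y) ≤ c ^ n * dist (h (F^[n] x)) (h' (F'^[n] y)) := by
  induction n generalizing x y with
  | zero => simp
  | succ n ih =>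
    calc dist (h x) (h' y)
        ≤ c * dist (h (F x)) (h' (F' y)) := hcontr x y
      _ ≤ c * (c ^ n * dist (h (F^[n] (F x))) (h' (F'^[n] (F' y)))) := by gcongr; exact ih _ _
      _ = c ^ (n + 1) * dist (h (F^[n + 1] x)) (h' (F'^[n + 1] y)) := by
        rw [iterate_succ_apply, iterate_succ_apply, pow_succ']; ring

end Contraction

section LocallyUniformConvergence

variable {ι X Y : Type*} {l : Filter ι}

lemma tendsto_prod_nhds_of_tendstoLocallyUniformly [TopologicalSpace X] [UniformSpace Y]
    {f : X → Y} {fk : ι → X → Y} (hf : Continuous f) (h : TendstoLocallyUniformly fk f l) (x : X) :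
    Tendsto (fun q : ι × X => fk q.1 q.2) (l ×ˢ 𝓝 x) (𝓝 (f x)) :=
  ((hf.tendsto x).comp tendsto_snd).congr_uniformity
    (tendstoLocallyUniformly_iff_forall_tendsto.1 h x)

lemma tendsto_iterate_prod_nhds [TopologicalSpace X] {F : X → X} {Fk : ι → X → X}
    (h : ∀ x, Tendsto (fun q : ι × X => Fk q.1 q.2) (l ×ˢ 𝓝 x) (𝓝 (F x))) (n : ℕ) (x : X) :
    Tendsto (fun q : ι × X => (Fk q.1)^[n] q.2) (l ×ˢ 𝓝 x) (𝓝 (F^[n] x)) := by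
  induction n with
  | zero => exact tendsto_snd
  | succ n ih =>
    simp only [iterate_succ_apply']
    exact (h (F^[n] x)).comp (tendsto_fst.prodMk ih)

lemma tendstoLocallyUniformly_of_dist_le_mul_dist [UniformSpace X] [PseudoMetricSpace Y]
    {F : X → X} {Fk : ι → X → X} (hF : Continuous F) (hFk : TendstoLocallyUniformly Fk F l)
    {h p : X → Y} {hk : ι → X → Y} {c C K : ℝ} (hc0 : 0 ≤ c) (hc1 : c < 1)
    (hcontr : ∀ k x y, dist (h x) (hk k y) ≤ c * dist (h (F x)) (hk k (Fk k y)))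
    (hp : Continuous p) (hC : ∀ x, dist (h x) (p x) ≤ C) (hK : ∀ k x, dist (hk k x) (p x) ≤ K) :
    TendstoLocallyUniformly hk h l := by
  rw [tendstoLocallyUniformly_iff_forall_tendsto]
  refine fun x => Metric.uniformity_basis_dist.tendsto_right_iff.2 fun ε hε => ?_
  obtain ⟨n, hn⟩ : ∃ n : ℕ, c ^ n * (C + 1 + K) < ε := by
    have hlim := (tendsto_pow_atTop_nhds_zero_of_lt_one hc0 hc1).mul_const (C + 1 + K)
    rw [zero_mul] at hlim
    exact (hlim.eventually_lt_const hε).exists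
  have hiter : Tendsto (fun q : ι × X => F^[n] q.2) (l ×ˢ 𝓝 x) (𝓝 (F^[n] x)) :=
    ((hF.iterate n).tendsto x).comp tendsto_snd
  have hiterk : Tendsto (fun q : ι × X => (Fk q.1)^[n] q.2) (l ×ˢ 𝓝 x) (𝓝 (F^[n] x)) :=
    tendsto_iterate_prod_nhds (tendsto_prod_nhds_of_tendstoLocallyUniformly hF hFk) n x
  have hdist : Tendsto (fun q : ι × X => dist (p (F^[n] q.2)) (p ((Fk q.1)^[n] q.2)))
      (l ×ˢ 𝓝 x) (𝓝 0) := by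
    simpa only [dist_self, comp_apply] using
      ((hp.tendsto _).comp hiter).dist ((hp.tendsto _).comp hiterk)
  filter_upwards [hdist.eventually_lt_const one_pos] with ⟨k, y⟩ hclose
  calc dist (h y) (hk k y)
      ≤ c ^ n * dist (h (F^[n] y)) (hk k ((Fk k)^[n] y)) :=
        dist_le_pow_mul_dist_iterate hc0 (hcontr k) n y y
    _ ≤ c ^ n * (C + 1 + K) := by
        gcongr
        refine (dist_triangle4 _ (p (F^[n] y)) (p ((Fk k)^[n] y)) _).trans ?_
        gcongr
        · exact hC _
        · exact dist_comm (hk k _) _ ▸ hK k _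
    _ < ε := hn

end LocallyUniformConvergence

section Factors

variable {X Y : Type*} [PseudoMetricSpace Y] {c : ℝ≥0} {S T : Y → Y} {δ C : ℝ}

lemma dist_le_of_semiconj_expansion (hc : c < 1) (hS : AntilipschitzWith c S)
    {F : X → X} {h p : X → Y} (hh : Semiconj h F S) (hp : ∀ x, dist (p (F x)) (S (p x)) ≤ δ)
    (hC : ∀ x, dist (h x) (p x) ≤ C) (x : X) :
    dist (h x) (p x) ≤ c * δ / (1 - c) := by
  refine le_div_one_sub_of_le_mul_comp_add (F := F) c.coe_nonneg hc hC (fun y => ?_) x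
  calc dist (h y) (p y)
      ≤ c * dist (S (h y)) (S (p y)) := hS.le_mul_dist _ _
    _ ≤ c * (dist (h (F y)) (p (F y)) + δ) := by
        rw [← hh y]
        gcongr
        exact (dist_triangle _ _ _).trans (by gcongr; exact hp y)
    _ = c * dist (h (F y)) (p (F y)) + c * δ := mul_add _ _ _

lemma dist_le_of_semiconj_contraction (hc : c < 1) (hT : LipschitzWith c T)
    {F : X → X} (hF : Surjective F) {h p : X → Y} (hh : Semiconj h F T)
    (hp : ∀ x, dist (p (F x)) (T (p x)) ≤ δ)
    (hC : ∀ x, dist (h x) (p x) ≤ C) (x : X) :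
    dist (h x) (p x) ≤ δ / (1 - c) := by
  refine le_div_one_sub_of_le_mul_comp_add (F := surjInv hF) c.coe_nonneg hc hC (fun y => ?_) x
  set w := surjInv hF y
  have hw : F w = y := surjInv_eq hF y
  calc dist (h y) (p y)
      = dist (T (h w)) (p (F w)) := by rw [← hh w, hw]
    _ ≤ dist (T (h w)) (T (p w)) + dist (p (F w)) (T (p w)) := dist_triangle_right _ _ _
    _ ≤ c * dist (h w) (p w) + δ := add_le_add (hT.dist_le_mul _ _) (hp w)

variable {ι : Type*} {l : Filter ι} [UniformSpace X] {h p : X → Y} {hk : ι → X → Y}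

lemma tendstoLocallyUniformly_of_semiconj_expansion (hc : c < 1) (hS : AntilipschitzWith c S)
    {F : X → X} {Fk : ι → X → X} (hF : Continuous F) (hFk : TendstoLocallyUniformly Fk F l)
    (hh : Semiconj h F S) (hhk : ∀ k, Semiconj (hk k) (Fk k) S)
    (hp : Continuous p) (hpk : ∀ k x, dist (p (Fk k x)) (S (p x)) ≤ δ)
    (hC : ∀ x, dist (h x) (p x) ≤ C) (hCk : ∀ k, ∃ D, ∀ x, dist (hk k x) (p x) ≤ D) :
    TendstoLocallyUniformly hk h l := by
  refine tendstoLocallyUniformly_of_dist_le_mul_dist hF hFk c.coe_nonneg hc (fun k x y => ?_) hp hC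
    fun k => (hCk k).elim fun _ => dist_le_of_semiconj_expansion hc hS (hhk k) (hpk k)
  rw [hh x, hhk k y]
  exact hS.le_mul_dist _ _

lemma tendstoLocallyUniformly_of_semiconj_contraction (hc : c < 1) (hT : LipschitzWith c T)
    {F : X ≃ X} {Fk : ι → X ≃ X} (hF : Continuous F.symm)
    (hFk : TendstoLocallyUniformly (fun k => ⇑(Fk k).symm) F.symm l)
    (hh : Semiconj h F T) (hhk : ∀ k, Semiconj (hk k) (Fk k) T)
    (hp : Continuous p) (hpk : ∀ k x, dist (p (Fk k x)) (T (p x)) ≤ δ)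
    (hC : ∀ x, dist (h x) (p x) ≤ C) (hCk : ∀ k, ∃ D, ∀ x, dist (hk k x) (p x) ≤ D) :
    TendstoLocallyUniformly hk h l := by
  refine tendstoLocallyUniformly_of_dist_le_mul_dist hF hFk c.coe_nonneg hc (fun k x y => ?_) hp hC
    fun k => (hCk k).elim fun _ =>
      dist_le_of_semiconj_contraction hc hT (Fk k).surjective (hhk k) (hpk k)
  obtain ⟨v, rfl⟩ := F.surjective x
  obtain ⟨w, rfl⟩ := (Fk k).surjective y
  rw [hh v, hhk k w, F.symm_apply_apply, (Fk k).symm_apply_apply]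
  exact hT.dist_le_mul _ _

end Factors

theorem semiconjugacy_continuous_dependence_general
    {A B ι : Type*} [PseudoMetricSpace A] [PseudoMetricSpace B] {l : Filter ι}
    {c : ℝ≥0} (hc : c < 1) {S : A → A} {T : B → B}
    (hS : AntilipschitzWith c S) (hT : LipschitzWith c T) {δ : ℝ}
    {G : (A × B) ≃ₜ (A × B)} {Gk : ι → (A × B) ≃ (A × B)}
    (hGk : ∀ k z, dist (Gk k z) (Prod.map S T z) ≤ δ)
    (hconv : TendstoLocallyUniformly (fun k => ⇑(Gk k)) G l)
    (hconvinv : TendstoLocallyUniformly (fun k => ⇑(Gk k).symm) G.symm l)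
    {H : A × B → A × B} {Hk : ι → A × B → A × B}
    (hH : Semiconj H G (Prod.map S T)) (hHk : ∀ k, Semiconj (Hk k) (Gk k) (Prod.map S T))
    (hHb : ∃ C, ∀ z, dist (H z) z ≤ C) (hHkb : ∀ k, ∃ C, ∀ z, dist (Hk k z) z ≤ C) :
    TendstoLocallyUniformly Hk H l := by
  obtain ⟨C, hC⟩ := hHb
  have hfst : TendstoLocallyUniformly (fun k z => (Hk k z).1) (fun z => (H z).1) l :=
    tendstoLocallyUniformly_of_semiconj_expansion hc hS G.continuous hconv
      (fun z => congrArg Prod.fst (hH z)) (fun k z => congrArg Prod.fst (hHk k z))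
      continuous_fst (fun k z => (le_max_left _ _).trans (hGk k z))
      (fun z => (le_max_left _ _).trans (hC z))
      fun k => (hHkb k).imp fun _ hD z => (le_max_left _ _).trans (hD z)
  have hsnd : TendstoLocallyUniformly (fun k z => (Hk k z).2) (fun z => (H z).2) l :=
    tendstoLocallyUniformly_of_semiconj_contraction (F := G.toEquiv) hc hT G.symm.continuous
      hconvinv (fun z => congrArg Prod.snd (hH z)) (fun k z => congrArg Prod.snd (hHk k z))
      continuous_snd (fun k z => (le_max_right _ _).trans (hGk k z))
      (fun z => (le_max_right _ _).trans (hC z))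
      fun k => (hHkb k).imp fun _ hD z => (le_max_right _ _).trans (hD z)
  exact hfst.prodMk hsnd

/-- continuity mechanism of Theorem 2: if homeomorphisms G_k converge
uniformly to G (and their inverses to G⁻¹), all within distance δ of the split
hyperbolic homeomorphism Φ, then the corresponding shadowing semiconjugacies H_k
converge pointwise to H. -/
theorem semiconjugacy_continuous_dependence
    {A B : Type*} [MetricSpace A] [CompleteSpace A] [MetricSpace B] [CompleteSpace B]
    (lam : ℝ) (hlam : 1 < lam) (S : Equiv.Perm A) (T : Equiv.Perm B)
    (hS : ∀ x y : A, dist (S x) (S y) = lam * dist x y)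
    (hT : ∀ x y : B, dist (T x) (T y) = lam⁻¹ * dist x y)
    (Φ : Equiv.Perm (A × B)) (hΦ : ∀ p : A × B, Φ p = (S p.1, T p.2))
    (δ : ℝ) (hδ : 0 < δ)
    (G : (A × B) ≃ₜ (A × B)) (Gk : ℕ → (A × B) ≃ₜ (A × B))
    (hG : ∀ z : A × B, dist (G z) (Φ z) ≤ δ)
    (hGk : ∀ k, ∀ z : A × B, dist (Gk k z) (Φ z) ≤ δ)
    (hconv : TendstoUniformly (fun k => ⇑(Gk k)) (⇑G) atTop)
    (hconvinv : TendstoUniformly (fun k => ⇑(Gk k).symm) (⇑G.symm) atTop)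
    (H : A × B → A × B) (Hk : ℕ → A × B → A × B)
    (hH : ∀ z, H (G z) = Φ (H z))
    (hHk : ∀ k, ∀ z, Hk k (Gk k z) = Φ (Hk k z))
    (hHb : ∃ C : ℝ, ∀ z, dist (H z) z ≤ C)
    (hHkb : ∀ k, ∃ C : ℝ, ∀ z, dist (Hk k z) z ≤ C) :
    ∀ z : A × B, Tendsto (fun k => Hk k z) atTop (𝓝 (H z)) := by
  obtain rfl : Φ = S.prodCongr T := Equiv.ext hΦ
  lift lam to ℝ≥0 using by positivity
  have hexp : AntilipschitzWith lam⁻¹ S := .of_le_mul_dist fun x y => by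
    rw [hS, NNReal.coe_inv, inv_mul_cancel_left₀ (by positivity)]
  have hcontr : LipschitzWith lam⁻¹ T := .of_dist_le_mul fun x y => by
    rw [hT, NNReal.coe_inv]
  have hlim : TendstoLocallyUniformly Hk H atTop :=
    semiconjugacy_continuous_dependence_general (Gk := fun k => (Gk k).toEquiv)
      (inv_lt_one_of_one_lt₀ hlam) hexp hcontr hGk hconv.tendstoLocallyUniformly
      hconvinv.tendstoLocallyUniformly hH hHk hHb hHkb
  exact fun z => hlim.tendstoLocallyUniformlyOn.tendsto_at (mem_univ z)
end
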